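/- The Andrews–Baxter–Forrester R-matrix R(λ,z) satisfies the quantum dynamical Yang–Baxter equation with spectral parameter: for all λ ∈ ℂ and all nonzero complex z₁, z₂, z₃ for which all entries appearing are defined (no theta denominator vanishes), the following identity of operators on V⊗V⊗V holds, where V = ℂe₁ ⊕ ℂe₋₁ with e_{±1} of weight ±1: R^{12}(λ − h^{(3)}, z₁/z₂) R^{13}(λ, z₁/z₃) R^{23}(λ − h^{(1)}, z₂/z₃) = R^{23}(λ, z₂/z₃) R^{13}(λ − h^{(2)}, z₁/z₃) R^{12}(λ, z₁/z₂). Here R^{ij} denotes R acting in the i-th and j-th tensor factors, and R^{ij}(λ − h^{(k)}, z) acts on a basis vector whose k-th tensor factor is e_ε (ε = ±1) as R^{ij}(λ − ε, z). -/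

import Mathlib

noncomputable section

open Finset

/-- The normalized Jacobi theta function `θ(z) = ∏_{j≥0} (1 - z p^j)(1 - p^{j+1}/z)`. -/
def theta (p : ℝ) (z : ℂ) : ℂ :=
  ∏' j : ℕ, ((1 - z * (p : ℂ) ^ j) * (1 - (p : ℂ) ^ (j + 1) / z))

/-- Complex power `q ^ l := exp (l · log q)` for a real base `q`. -/
def qp (q : ℝ) (l : ℂ) : ℂ := Complex.exp (l * (Real.log q : ℂ))

/-- Elliptic Pochhammer symbol `(a)_n = ∏_{i=0}^{n-1} θ(a q^{2i})` in base `q², p`. -/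
def epoch (p q : ℝ) (a : ℂ) (n : ℕ) : ℂ :=
  ∏ i ∈ Finset.range n, theta p (a * qp q (2 * (i : ℂ)))

/-- Elliptic binomial coefficient `[k over l] = ∏_{i=1}^{l} θ(q^{2(k-l+i)})/θ(q^{2i})`. -/
def ellbin (p q : ℝ) (k l : ℕ) : ℂ :=
  ∏ i ∈ Finset.range l,
    theta p (qp q (2 * ((k : ℂ) - (l : ℂ) + (i : ℂ) + 1))) / theta p (qp q (2 * ((i : ℂ) + 1)))

/-- Entry `a(λ,z)` of the Andrews–Baxter–Forrester `R`-matrix. -/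
def Ra (p q : ℝ) (lam z : ℂ) : ℂ :=
  theta p z * theta p (qp q (2 * (lam + 2))) /
    (theta p (qp q 2 * z) * theta p (qp q (2 * (lam + 1))))

/-- Entry `b(λ,z)` of the Andrews–Baxter–Forrester `R`-matrix. -/
def Rb (p q : ℝ) (lam z : ℂ) : ℂ :=
  theta p (qp q 2) * theta p (qp q (-2 * (lam + 1)) * z) /
    (theta p (qp q 2 * z) * theta p (qp q (-2 * (lam + 1))))

/-- Entry `c(λ,z)` of the Andrews–Baxter–Forrester `R`-matrix. -/
def Rc (p q : ℝ) (lam z : ℂ) : ℂ :=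
  theta p (qp q 2) * theta p (qp q (2 * (lam + 1)) * z) /
    (theta p (qp q 2 * z) * theta p (qp q (2 * (lam + 1))))

/-- Entry `d(λ,z)` of the Andrews–Baxter–Forrester `R`-matrix. -/
def Rd (p q : ℝ) (lam z : ℂ) : ℂ :=
  theta p z * theta p (qp q (-2 * lam)) /
    (theta p (qp q 2 * z) * theta p (qp q (-2 * (lam + 1))))

/-- Coefficient `A_k(λ,z)` of the Felder–Varchenko dynamical representation `π^ω`. -/
def Ak (p q : ℝ) (om : ℂ) (k : ℕ) (lam z : ℂ) : ℂ :=
  qp q (2 * (k : ℂ)) * theta p (qp q (-2 * (lam + 1) - 2 * (k : ℂ))) *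
      theta p (z * qp q (om - 2 * (k : ℂ) + 1)) /
    (theta p (qp q (-2 * (lam + 1))) * theta p (z * qp q (om + 1)))

/-- Coefficient `B_k(λ,z)` of the Felder–Varchenko dynamical representation `π^ω`. -/
def Bk (p q : ℝ) (om : ℂ) (k : ℕ) (lam z : ℂ) : ℂ :=
  qp q (k : ℂ) * theta p (qp q 2) *
      theta p (z * qp q (-2 * (lam + 1) + om - 2 * (k : ℂ) - 1)) /
    (theta p (qp q (-2 * (lam + 1))) * theta p (z * qp q (om + 1)))

/-- Coefficient `C_k(λ,z)` of the Felder–Varchenko dynamical representation `π^ω`;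
`C_0 = 0`. -/
def Ck (p q : ℝ) (om : ℂ) (k : ℕ) (lam z : ℂ) : ℂ :=
  if k = 0 then 0
  else
    qp q (-((k : ℂ) - 1)) * theta p (qp q (2 * (k : ℂ))) *
        theta p (qp q (2 * (om - (k : ℂ) + 1))) *
        theta p (z * qp q (2 * (lam + 1) - om + 2 * (k : ℂ) - 1)) /
      (theta p (qp q 2) * theta p (qp q (2 * (lam + 1))) * theta p (z * qp q (om + 1)))

/-- Coefficient `D_k(λ,z)` of the Felder–Varchenko dynamical representation `π^ω`. -/
def Dk (p q : ℝ) (om : ℂ) (k : ℕ) (lam z : ℂ) : ℂ :=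
  theta p (qp q (-2 * (lam + 1 - om + (k : ℂ)))) * theta p (z * qp q (-om + 2 * (k : ℂ) + 1)) /
    (theta p (qp q (-2 * (lam + 1))) * theta p (z * qp q (om + 1)))

/-- `F(μ) = q^μ θ(q^{-2(μ+1)})`. -/
def Fdet (p q : ℝ) (mu : ℂ) : ℂ := qp q mu * theta p (qp q (-2 * (mu + 1)))

/-- The coefficient `C_{kl}(μ)` from the corepresentation matrix elements. -/
def Ckl (p q : ℝ) (k l : ℕ) (mu : ℂ) : ℂ :=
  ellbin p q k l * epoch p q (qp q (2 * (mu - (l : ℂ) + 2))) l /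
    epoch p q (qp q (2 * (mu + (k : ℂ) - 2 * (l : ℂ) + 2))) l

/-- The terminating balanced very-well-poised elliptic hypergeometric series
`₁₀ω₉(a₁; a₄,…,a₁₀)`, truncated at `n`. -/
def tenW9 (p q : ℝ) (n : ℕ) (a1 a4 a5 a6 a7 a8 a9 a10 : ℂ) : ℂ :=
  ∑ k ∈ Finset.range (n + 1),
    theta p (a1 * qp q (4 * (k : ℂ))) / theta p a1 *
      (epoch p q a1 k * epoch p q a4 k * epoch p q a5 k * epoch p q a6 k * epoch p q a7 k *
        epoch p q a8 k * epoch p q a9 k * epoch p q a10 k * qp q (2 * (k : ℂ))) /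
      (epoch p q (qp q 2) k * epoch p q (a1 * qp q 2 / a4) k * epoch p q (a1 * qp q 2 / a5) k *
        epoch p q (a1 * qp q 2 / a6) k * epoch p q (a1 * qp q 2 / a7) k *
        epoch p q (a1 * qp q 2 / a8) k * epoch p q (a1 * qp q 2 / a9) k *
        epoch p q (a1 * qp q 2 / a10) k)

/-- The product of all theta factors appearing in denominators of the terms of
`tenW9 p q n a1 a4 … a10` (including the `θ(a₁)` from the very-well-poised prefactor). -/
def tenW9Den (p q : ℝ) (n : ℕ) (a1 a4 a5 a6 a7 a8 a9 a10 : ℂ) : ℂ :=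
  theta p a1 * epoch p q (qp q 2) n * epoch p q (a1 * qp q 2 / a4) n *
    epoch p q (a1 * qp q 2 / a5) n * epoch p q (a1 * qp q 2 / a6) n *
    epoch p q (a1 * qp q 2 / a7) n * epoch p q (a1 * qp q 2 / a8) n *
    epoch p q (a1 * qp q 2 / a9) n * epoch p q (a1 * qp q 2 / a10) n

/-- The ABF `R`-matrix as a matrix on `V ⊗ V`, `V = ℂe₁ ⊕ ℂe₋₁`.  The basis of
`V` is indexed by `Fin 2`, where `0` stands for `e₁` (weight `+1`) and `1`
stands for `e₋₁` (weight `−1`).  The entry at row `(x,y)` and column `(a,b)`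
is the coefficient `R^{ab}_{xy}` in `R(e_a ⊗ e_b) = Σ R^{ab}_{xy} e_x ⊗ e_y`. -/
def Rmat (p q : ℝ) (lam z : ℂ) : Matrix (Fin 2 × Fin 2) (Fin 2 × Fin 2) ℂ :=
  fun x y =>
    if x = ((0 : Fin 2), (0 : Fin 2)) ∧ y = ((0 : Fin 2), (0 : Fin 2)) then 1
    else if x = ((1 : Fin 2), (1 : Fin 2)) ∧ y = ((1 : Fin 2), (1 : Fin 2)) then 1
    else if x = ((0 : Fin 2), (1 : Fin 2)) ∧ y = ((0 : Fin 2), (1 : Fin 2)) then Ra p q lam z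
    else if x = ((0 : Fin 2), (1 : Fin 2)) ∧ y = ((1 : Fin 2), (0 : Fin 2)) then Rb p q lam z
    else if x = ((1 : Fin 2), (0 : Fin 2)) ∧ y = ((0 : Fin 2), (1 : Fin 2)) then Rc p q lam z
    else if x = ((1 : Fin 2), (0 : Fin 2)) ∧ y = ((1 : Fin 2), (0 : Fin 2)) then Rd p q lam z
    else 0

/-- The weight of the basis vector `e₁` resp. `e₋₁` of `V`. -/
def wt (i : Fin 2) : ℂ := if i = 0 then 1 else -1

/-- `R` acting in the first and second tensor factors of `V ⊗ V ⊗ V`, with the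
dynamical parameter allowed to depend (through `f`) on the index of the basis
vector in the third (spectator) factor; this realizes `R^{12}(λ - h^{(3)}, z)`
when `f = fun ε => λ - wt ε` and `R^{12}(λ, z)` when `f` is constant. -/
def R12 (p q : ℝ) (f : Fin 2 → ℂ) (z : ℂ) :
    Matrix (Fin 2 × Fin 2 × Fin 2) (Fin 2 × Fin 2 × Fin 2) ℂ :=
  fun x y =>
    Rmat p q (f y.2.2) z (x.1, x.2.1) (y.1, y.2.1) * if x.2.2 = y.2.2 then 1 else 0

/-- `R` acting in the first and third tensor factors, the second being the
spectator. -/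
def R13 (p q : ℝ) (f : Fin 2 → ℂ) (z : ℂ) :
    Matrix (Fin 2 × Fin 2 × Fin 2) (Fin 2 × Fin 2 × Fin 2) ℂ :=
  fun x y =>
    Rmat p q (f y.2.1) z (x.1, x.2.2) (y.1, y.2.2) * if x.2.1 = y.2.1 then 1 else 0

/-- `R` acting in the second and third tensor factors, the first being the
spectator. -/
def R23 (p q : ℝ) (f : Fin 2 → ℂ) (z : ℂ) :
    Matrix (Fin 2 × Fin 2 × Fin 2) (Fin 2 × Fin 2 × Fin 2) ℂ :=
  fun x y =>
    Rmat p q (f y.1) z (x.2.1, x.2.2) (y.2.1, y.2.2) * if x.1 = y.1 then 1 else 0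

/-!
In additive notation, and up to elementary factors, the theta function is an odd function `F`
satisfying the three-term relation of the Weierstrass sigma function, and the Yang–Baxter equation
holds over any field for the `R`-matrix built from such an `F`. Both sides preserve weight, so each
maps the span of the three basis vectors with exactly one factor `e₋₁` to itself, and exchanging
`e₁` and `e₋₁` changes only the sign of the dynamical parameter. This leaves nine matrix entries,
two of which are trivial. Six of the others are one three-term relation each, while the middle one
is a combination of two.

To obtain the three-term relation, the Jacobi triple product (the limit of Cauchy's finite form)
turns the product `θ` into the theta series. Splitting the double series for
`F (x + y) F (x - y)` by the parity of the sum of the summation indices exhibits it as a `2 × 2`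
minor, and the three-term relation becomes a Plücker relation.
-/

open Filter Topology
open Complex (I)
open scoped Real

section TripleProduct

variable {𝕜 : Type*} [NormedField 𝕜] {p : 𝕜}

/-- The `q`-Pochhammer symbol `(p; p)_n`. -/
def qPochhammer (p : 𝕜) (n : ℕ) : 𝕜 := ∏ i ∈ range n, (1 - p ^ (i + 1))

/-- The reciprocal `1 / (p; p)_k`, extended by zero to negative `k`; with this convention the
recurrence `invQPochhammer_sub_one` holds for every integer `k`. -/
def invQPochhammer (p : 𝕜) : ℤ → 𝕜
  | .ofNat k => (qPochhammer p k)⁻¹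
  | .negSucc _ => 0

/-- The Gaussian binomial coefficient `[2N, N + n]` divided by `(p; p)_{2N}`. -/
def tripleCoeff (p : 𝕜) (N : ℕ) (n : ℤ) : 𝕜 :=
  invQPochhammer p (N + n) * invQPochhammer p (N - n)

lemma one_sub_pow_succ_ne_zero (hp : ‖p‖ < 1) (n : ℕ) : 1 - p ^ (n + 1) ≠ 0 := by
  refine sub_ne_zero.2 fun h => (pow_lt_one₀ (norm_nonneg p) hp n.succ_ne_zero).ne ?_
  rw [← norm_pow, ← h, norm_one]

lemma qPochhammer_ne_zero (hp : ‖p‖ < 1) (n : ℕ) : qPochhammer p n ≠ 0 :=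
  prod_ne_zero_iff.2 fun i _ => one_sub_pow_succ_ne_zero hp i

lemma invQPochhammer_of_neg {k : ℤ} (hk : k < 0) : invQPochhammer p k = 0 := by
  obtain ⟨m, rfl⟩ := Int.eq_negSucc_of_lt_zero hk
  rfl

lemma invQPochhammer_sub_one (hp : ‖p‖ < 1) (k : ℤ) :
    invQPochhammer p (k - 1) = (1 - p ^ k) * invQPochhammer p k := by
  rcases lt_trichotomy k 0 with hk | rfl | hk
  · rw [invQPochhammer_of_neg hk, invQPochhammer_of_neg (by lia), mul_zero]
  · simp [invQPochhammer_of_neg]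
  · obtain ⟨m, rfl⟩ : ∃ m : ℕ, k = (m + 1 : ℕ) := ⟨(k - 1).toNat, by lia⟩
    have hm := one_sub_pow_succ_ne_zero hp m
    have hpred : ((m + 1 : ℕ) : ℤ) - 1 = m := by simp
    change _ = _ * (qPochhammer p (m + 1))⁻¹
    rw [hpred, zpow_natCast, qPochhammer, prod_range_succ, mul_inv_rev, mul_inv_cancel_left₀ hm]
    rfl

lemma tripleCoeff_succ (hp0 : p ≠ 0) (hp : ‖p‖ < 1) (N : ℕ) (n : ℤ) :
    (1 - p ^ (2 * N + 1)) * (1 - p ^ (2 * N + 2)) * tripleCoeff p (N + 1) n =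
      (1 + p ^ (2 * N + 1)) * tripleCoeff p N n + p ^ (N + 1 - n) * tripleCoeff p N (n - 1) +
        p ^ (N + 1 + n) * tripleCoeff p N (n + 1) := by
  have hA := invQPochhammer_sub_one hp (N + 1 + n)
  have hA' := invQPochhammer_sub_one hp (N + n)
  have hB := invQPochhammer_sub_one hp (N + 1 - n)
  have hB' := invQPochhammer_sub_one hp (N - n)
  rw [show (N : ℤ) + 1 + n - 1 = N + n by ring] at hA
  rw [show (N : ℤ) + 1 - n - 1 = N - n by ring] at hB
  simp only [tripleCoeff]
  rw [show (N : ℤ) + (n - 1) = N + n - 1 by ring, show (N : ℤ) - (n - 1) = N + 1 - n by ring,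
    show (N : ℤ) + (n + 1) = N + 1 + n by ring, show (N : ℤ) - (n + 1) = N - n - 1 by ring]
  push_cast
  rw [hA', hB', hA, hB]
  have hn := zpow_ne_zero n hp0
  simp only [zpow_add₀ hp0, zpow_sub₀ hp0, zpow_one, zpow_natCast]
  field_simp
  ring

/-- The finite form of the triple product, due to Cauchy. The recurrence determines
`t n = (-1) ^ n * p ^ (n * (n - 1) / 2) * z ^ n`. -/
lemma hasSum_mul_tripleCoeff {z : 𝕜} (hp0 : p ≠ 0) (hp : ‖p‖ < 1) (hz : z ≠ 0) {t : ℤ → 𝕜}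
    (ht0 : t 0 = 1) (ht : ∀ n, t (n + 1) = -(z * p ^ n) * t n) (N : ℕ) :
    HasSum (fun n => t n * tripleCoeff p N n)
      ((∏ j ∈ range N, (1 - z * p ^ j) * (1 - p ^ (j + 1) / z)) / qPochhammer p (2 * N)) := by
  induction N with
  | zero =>
    have hsupp : ∀ n : ℤ, n ≠ 0 → t n * tripleCoeff p 0 n = 0 := fun n hn => by
      rcases lt_or_gt_of_ne hn with h | h <;> simp [tripleCoeff, invQPochhammer_of_neg, h]
    have hzero : invQPochhammer p 0 = 1 := by
      change (qPochhammer p 0)⁻¹ = 1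
      simp [qPochhammer]
    simpa [qPochhammer, tripleCoeff, ht0, hzero] using hasSum_single 0 hsupp
  | succ N ih =>
    have hpred := (Equiv.subRight (1 : ℤ)).hasSum_iff.2 ih
    have hsucc := (Equiv.addRight (1 : ℤ)).hasSum_iff.2 ih
    have hodd := one_sub_pow_succ_ne_zero hp (2 * N)
    have heven := one_sub_pow_succ_ne_zero hp (2 * N + 1)
    convert! (((ih.mul_left (1 + p ^ (2 * N + 1))).sub (hpred.mul_left (z * p ^ N))).sub
      (hsucc.mul_left (p ^ (N + 1) / z))).mul_left
        ((1 - p ^ (2 * N + 1)) * (1 - p ^ (2 * N + 2)))⁻¹ using 1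
    · funext n
      simp only [Function.comp_apply, Equiv.subRight_apply, Equiv.coe_addRight]
      have htpred : t n = -(z * p ^ (n - 1)) * t (n - 1) := by simpa using ht (n - 1)
      rw [eq_inv_mul_iff_mul_eq₀ (mul_ne_zero hodd heven), mul_left_comm,
        tripleCoeff_succ hp0 hp, ht n, htpred]
      have hn := zpow_ne_zero n hp0
      simp only [zpow_add₀ hp0, zpow_sub₀ hp0, zpow_one, zpow_natCast]
      field_simp
      ring
    · have hN := qPochhammer_ne_zero hp (2 * N)
      have hstep : qPochhammer p (2 * (N + 1)) =
          qPochhammer p (2 * N) * (1 - p ^ (2 * N + 1)) * (1 - p ^ (2 * N + 2)) := by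
        simp only [qPochhammer, mul_add, mul_one, prod_range_succ]
      rw [prod_range_succ, hstep]
      field_simp
      ring

lemma summable_norm_pow_succ (hp : ‖p‖ < 1) : Summable fun j : ℕ => ‖p ^ (j + 1)‖ := by
  simpa [pow_succ] using (summable_geometric_of_lt_one (norm_nonneg p) hp).mul_right ‖p‖

variable [CompleteSpace 𝕜]

lemma multipliable_one_sub_of_summable {ι : Type*} {f : ι → 𝕜} (hf : Summable (‖f ·‖)) :
    Multipliable fun i => 1 - f i := by
  simp_rw [sub_eq_add_neg]
  exact multipliable_one_add_of_summable (by simpa only [norm_neg] using hf)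

lemma tprod_one_sub_pow_succ_ne_zero (hp : ‖p‖ < 1) : ∏' j : ℕ, (1 - p ^ (j + 1)) ≠ 0 := by
  simp_rw [sub_eq_add_neg]
  exact tprod_one_add_ne_zero_of_summable
    (fun j => by rw [← sub_eq_add_neg]; exact one_sub_pow_succ_ne_zero hp j)
    (by simpa only [norm_neg] using summable_norm_pow_succ hp)

lemma tendsto_qPochhammer (hp : ‖p‖ < 1) :
    Tendsto (qPochhammer p) atTop (𝓝 (∏' j : ℕ, (1 - p ^ (j + 1)))) :=
  (multipliable_one_sub_of_summable (summable_norm_pow_succ hp)).tendsto_prod_tprod_nat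

lemma tendsto_invQPochhammer (hp : ‖p‖ < 1) :
    Tendsto (invQPochhammer p) atTop (𝓝 (∏' j : ℕ, (1 - p ^ (j + 1)))⁻¹) := by
  rw [← Nat.map_cast_int_atTop, tendsto_map'_iff]
  exact (tendsto_qPochhammer hp).inv₀ (tprod_one_sub_pow_succ_ne_zero hp)

lemma exists_norm_invQPochhammer_le (hp : ‖p‖ < 1) : ∃ C, ∀ k, ‖invQPochhammer p k‖ ≤ C := by
  obtain ⟨C, hC⟩ := (Metric.isBounded_range_of_tendsto _ ((tendsto_qPochhammer hp).inv₀
    (tprod_one_sub_pow_succ_ne_zero hp))).exists_norm_le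
  refine ⟨C, fun k => ?_⟩
  rcases k with k | _
  · exact hC _ ⟨k, rfl⟩
  · exact norm_zero.trans_le ((norm_nonneg _).trans (hC _ ⟨0, rfl⟩))

lemma tendsto_tripleCoeff (hp : ‖p‖ < 1) (n : ℤ) :
    Tendsto (fun N => tripleCoeff p N n) atTop
      (𝓝 ((∏' j : ℕ, (1 - p ^ (j + 1)))⁻¹ * (∏' j : ℕ, (1 - p ^ (j + 1)))⁻¹)) :=
  ((tendsto_invQPochhammer hp).comp
      (tendsto_atTop_add_const_right _ n tendsto_natCast_atTop_atTop)).mul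
    ((tendsto_invQPochhammer hp).comp
      (tendsto_atTop_add_const_right _ (-n) tendsto_natCast_atTop_atTop))

lemma multipliable_triple_product (hp : ‖p‖ < 1) (z : 𝕜) :
    Multipliable fun j : ℕ => (1 - z * p ^ j) * (1 - p ^ (j + 1) / z) := by
  have hleft : Summable fun j : ℕ => ‖z * p ^ j‖ := by
    simpa using (summable_geometric_of_lt_one (norm_nonneg p) hp).mul_left ‖z‖
  have hright : Summable fun j : ℕ => ‖p ^ (j + 1) / z‖ := by
    simpa [div_eq_mul_inv] using (summable_norm_pow_succ hp).mul_right ‖z‖⁻¹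
  exact (multipliable_one_sub_of_summable hleft).mul (multipliable_one_sub_of_summable hright)

theorem tsum_eq_triple_product {z : 𝕜} (hp0 : p ≠ 0) (hp : ‖p‖ < 1) (hz : z ≠ 0) {t : ℤ → 𝕜}
    (ht0 : t 0 = 1) (ht : ∀ n, t (n + 1) = -(z * p ^ n) * t n) (hsum : Summable (‖t ·‖)) :
    ∑' n, t n =
      (∏' j : ℕ, (1 - p ^ (j + 1))) * ∏' j : ℕ, (1 - z * p ^ j) * (1 - p ^ (j + 1) / z) := by
  have hφ := tprod_one_sub_pow_succ_ne_zero hp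
  obtain ⟨C, hC⟩ := exists_norm_invQPochhammer_le hp
  have hseries := tendsto_tsum_of_dominated_convergence (hsum.mul_right (C * C))
    (fun n => (tendsto_tripleCoeff hp n).const_mul (t n))
    (.of_forall fun N n => by
      rw [norm_mul, tripleCoeff, norm_mul]
      gcongr
      exacts [(norm_nonneg _).trans (hC 0), hC _, hC _])
  have hprod := (multipliable_triple_product hp z).tendsto_prod_tprod_nat.div
    ((tendsto_qPochhammer hp).comp (tendsto_id.const_mul_atTop' two_pos)) hφ
  have hlim := tendsto_nhds_unique hseries
    (hprod.congr fun N => (hasSum_mul_tripleCoeff hp0 hp hz ht0 ht N).tsum_eq.symm)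
  rw [tsum_mul_right, ← mul_inv, ← div_eq_mul_inv, div_eq_div_iff (mul_ne_zero hφ hφ) hφ] at hlim
  exact mul_right_cancel₀ hφ (by rw [hlim]; ring)

end TripleProduct

section JacobiTheta

variable {τ : ℂ}

theorem jacobiTheta₂_eq_triple_product (hτ : 0 < τ.im) (w : ℂ) :
    jacobiTheta₂ (w + (1 - τ) / 2) τ =
      (∏' j : ℕ, (1 - Complex.exp (2 * π * I * τ) ^ (j + 1))) *
        ∏' j : ℕ, (1 - Complex.exp (2 * π * I * w) * Complex.exp (2 * π * I * τ) ^ j) *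
          (1 - Complex.exp (2 * π * I * τ) ^ (j + 1) / Complex.exp (2 * π * I * w)) := by
  have hp : ‖Complex.exp (2 * π * I * τ)‖ < 1 := by
    simpa [Complex.norm_exp] using mul_pos Real.two_pi_pos hτ
  refine tsum_eq_triple_product (t := fun n => jacobiTheta₂_term n (w + (1 - τ) / 2) τ)
    (Complex.exp_ne_zero _) hp (Complex.exp_ne_zero _) (by simp [jacobiTheta₂_term]) (fun n => ?_)
    ((summable_jacobiTheta₂_term_iff _ τ).2 hτ).norm
  simp only [jacobiTheta₂_term]
  rw [← Complex.exp_int_mul, ← Complex.exp_add, neg_mul, ← Complex.exp_add,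
    ← Complex.exp_add_pi_mul_I]
  push_cast
  congr 1
  ring

/-- The partition of `ℤ × ℤ` by the parity of the sum of the coordinates. -/
def intProdParityEquiv : (ℤ × ℤ) ⊕ (ℤ × ℤ) ≃ ℤ × ℤ where
  toFun := Sum.elim (fun a => (a.1 + a.2, a.1 - a.2)) fun a => (a.1 + a.2 + 1, a.1 - a.2)
  invFun b :=
    if (b.1 + b.2) % 2 = 0 then .inl ((b.1 + b.2) / 2, (b.1 - b.2) / 2)
    else .inr ((b.1 + b.2 - 1) / 2, (b.1 - b.2 - 1) / 2)
  left_inv := by rintro (⟨j, k⟩ | ⟨j, k⟩) <;> grind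
  right_inv := by rintro ⟨m, n⟩; grind

theorem jacobiTheta₂_add_mul_jacobiTheta₂_sub (hτ : 0 < τ.im) (x y : ℂ) :
    jacobiTheta₂ (x + y) τ * jacobiTheta₂ (x - y) τ =
      jacobiTheta₂ (2 * x) (2 * τ) * jacobiTheta₂ (2 * y) (2 * τ) +
        Complex.exp (2 * π * I * (x + y) + π * I * τ) *
          (jacobiTheta₂ (2 * x + τ) (2 * τ) * jacobiTheta₂ (2 * y + τ) (2 * τ)) := by
  have hasSum_mul {σ : ℂ} (hσ : 0 < σ.im) (v w : ℂ) :
      HasSum (fun a : ℤ × ℤ => jacobiTheta₂_term a.1 v σ * jacobiTheta₂_term a.2 w σ)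
        (jacobiTheta₂ v σ * jacobiTheta₂ w σ) :=
    have hv := ((summable_jacobiTheta₂_term_iff v σ).2 hσ).norm
    have hw := ((summable_jacobiTheta₂_term_iff w σ).2 hσ).norm
    tsum_mul_tsum_of_summable_norm hv hw ▸ (summable_mul_of_summable_norm hv hw).hasSum
  have h2τ : 0 < (2 * τ).im := by simpa using hτ
  have heven : HasSum
      (fun a : ℤ × ℤ =>
        jacobiTheta₂_term (a.1 + a.2) (x + y) τ * jacobiTheta₂_term (a.1 - a.2) (x - y) τ)
      (jacobiTheta₂ (2 * x) (2 * τ) * jacobiTheta₂ (2 * y) (2 * τ)) := by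
    convert! hasSum_mul h2τ (2 * x) (2 * y) using 2 with a
    simp only [jacobiTheta₂_term, ← Complex.exp_add]
    push_cast
    ring_nf
  have hodd : HasSum
      (fun a : ℤ × ℤ =>
        jacobiTheta₂_term (a.1 + a.2 + 1) (x + y) τ * jacobiTheta₂_term (a.1 - a.2) (x - y) τ)
      (Complex.exp (2 * π * I * (x + y) + π * I * τ) *
        (jacobiTheta₂ (2 * x + τ) (2 * τ) * jacobiTheta₂ (2 * y + τ) (2 * τ))) := by
    convert! (hasSum_mul h2τ (2 * x + τ) (2 * y + τ)).mul_left
      (Complex.exp (2 * π * I * (x + y) + π * I * τ)) using 2 with a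
    simp only [jacobiTheta₂_term, ← Complex.exp_add]
    push_cast
    ring_nf
  have hsplit := intProdParityEquiv.hasSum_iff.2 (hasSum_mul hτ (x + y) (x - y))
  exact hsplit.unique (.sum heven hodd)

end JacobiTheta

section SigmaLike

/-- Odd functions satisfying the three-term relation of the Weierstrass sigma function, of which
`id`, `Complex.sin` and the odd theta function are further examples. In terms of
`(α, β, γ, δ) = (x + y, x - y, u + v, u - v)` and `s = x + u` the relation says that the sum of
`F (x + y) F (x - y) F (u + v) F (u - v)` over the cyclic permutations of `y, u, v` vanishes; the
form used here does not need division by two. -/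
structure IsSigmaLike {A K : Type*} [AddCommGroup A] [Field K] (F : A → K) : Prop where
  map_neg : ∀ x, F (-x) = -F x
  three_term : ∀ {α β γ δ s : A}, α + β + γ + δ = s + s →
    F α * F β * F γ * F δ =
      F s * F (s - γ - δ) * F (s - β - δ) * F (s - β - γ) +
        F (s - δ) * F (s - γ) * F (s - β) * F (s - α)

namespace IsSigmaLike

variable {A B K : Type*} [AddCommGroup A] [AddCommGroup B] [Field K] {F : A → K}

lemma three_term_of_eq (hF : IsSigmaLike F) {α β γ δ s a₁ a₂ a₃ b₁ b₂ b₃ b₄ : A}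
    (hs : α + β + γ + δ = s + s := by abel) (ha₁ : a₁ = s - γ - δ := by abel)
    (ha₂ : a₂ = s - β - δ := by abel) (ha₃ : a₃ = s - β - γ := by abel)
    (hb₁ : b₁ = s - δ := by abel) (hb₂ : b₂ = s - γ := by abel) (hb₃ : b₃ = s - β := by abel)
    (hb₄ : b₄ = s - α := by abel) :
    F α * F β * F γ * F δ = F s * F a₁ * F a₂ * F a₃ + F b₁ * F b₂ * F b₃ * F b₄ := by
  subst ha₁ ha₂ ha₃ hb₁ hb₂ hb₃ hb₄
  exact hF.three_term hs

lemma comp_addMonoidHom (hF : IsSigmaLike F) (φ : B →+ A) : IsSigmaLike (F ∘ φ) where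
  map_neg x := by simp [hF.map_neg]
  three_term h := by
    simpa using hF.three_term (by simpa using congrArg φ h)

lemma const_mul (hF : IsSigmaLike F) (c : K) : IsSigmaLike fun x => c * F x where
  map_neg x := by simp [hF.map_neg]
  three_term h := by linear_combination c ^ 4 * hF.three_term h

/-- In the variables `x, y, u, v` each side of the three-term relation is a sum of products of
`2 × 2` minors of the matrix with columns `(o, e)`, and the relation is the Plücker relation. -/
lemma of_add_mul_sub {E : Type*} [Field E] [NeZero (2 : E)] {F : E → K} (e o : E → K)
    (hdet : ∀ x y, F (x + y) * F (x - y) = o x * e y - e x * o y) : IsSigmaLike F := by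
  have exists_half (a b : E) : ∃ x y, a = x + y ∧ b = x - y :=
    ⟨(a + b) / 2, (a - b) / 2, by ring_nf; field_simp, by ring_nf; field_simp⟩
  have hneg (b : E) : F (-b) = -F b := by
    by_cases hF : ∀ a, F a = 0
    · simp [hF]
    obtain ⟨a, ha⟩ := not_forall.1 hF
    obtain ⟨x, y, rfl, rfl⟩ := exists_half a b
    refine mul_left_cancel₀ ha ?_
    have hswap := hdet y x
    rw [add_comm] at hswap
    rw [neg_sub, mul_neg, hdet, hswap]
    ring
  refine ⟨hneg, fun {α β γ δ s} h => ?_⟩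
  obtain ⟨x, y, rfl, rfl⟩ := exists_half α β
  obtain ⟨u, v, rfl, rfl⟩ := exists_half γ δ
  obtain rfl : s = x + u := mul_left_cancel₀ (two_ne_zero (α := E)) (by linear_combination -h)
  calc
    _ = F (x + y) * F (x - y) * (F (u + v) * F (u - v)) := by ring
    _ = F (x + u) * F (x - u) * (F (y + v) * F (y - v)) +
          F (x + v) * F (x - v) * (F (u + y) * F (u - y)) := by
      simp only [hdet]
      ring
    _ = _ := by ring_nf

end IsSigmaLike

end SigmaLike

/-- The theta function in additive notation `z = exp x`, normalized to be odd. -/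
def oddTheta (p : ℝ) (x : ℂ) : ℂ :=
  Complex.exp (-x / 2) * theta p (Complex.exp x)

lemma theta_exp (p : ℝ) (x : ℂ) :
    theta p (Complex.exp x) = Complex.exp (x / 2) * oddTheta p x := by
  rw [oddTheta, ← mul_assoc, ← Complex.exp_add, neg_div, add_neg_cancel, Complex.exp_zero, one_mul]

lemma oddTheta_eq_zero_iff {p : ℝ} {x : ℂ} : oddTheta p x = 0 ↔ theta p (Complex.exp x) = 0 := by
  simp [oddTheta]

lemma isSigmaLike_jacobiTheta₂ {τ : ℂ} (hτ : 0 < τ.im) :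
    IsSigmaLike fun w => Complex.exp (-(π * I * w)) * jacobiTheta₂ (w + (1 - τ) / 2) τ := by
  refine .of_add_mul_sub (fun x => jacobiTheta₂ (2 * x) (2 * τ))
    (fun x => Complex.exp (2 * π * I * x) * jacobiTheta₂ (2 * x + τ) (2 * τ)) fun x y => ?_
  have heven : jacobiTheta₂ (2 * (x + (1 - τ) / 2)) (2 * τ) =
      Complex.exp (2 * π * I * x) *
        (Complex.exp (2 * π * I * x) * jacobiTheta₂ (2 * x + τ) (2 * τ)) := by
    have hshift := jacobiTheta₂_add_left' (2 * x - τ) (2 * τ)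
    rw [show 2 * x - τ + 2 * τ = 2 * x + τ by ring] at hshift
    rw [show 2 * (x + (1 - τ) / 2) = 2 * x - τ + 1 by ring, jacobiTheta₂_add_left, hshift]
    simp only [← mul_assoc, ← Complex.exp_add]
    ring_nf
    simp
  have hodd : jacobiTheta₂ (2 * (x + (1 - τ) / 2) + τ) (2 * τ) = jacobiTheta₂ (2 * x) (2 * τ) := by
    rw [show 2 * (x + (1 - τ) / 2) + τ = 2 * x + 1 by ring, jacobiTheta₂_add_left]
  have hfactor : Complex.exp (2 * π * I * (x + (1 - τ) / 2 + y) + π * I * τ) =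
      -(Complex.exp (2 * π * I * x) * Complex.exp (2 * π * I * y)) := by
    rw [← Complex.exp_add, ← Complex.exp_add_pi_mul_I]
    ring_nf
  have hprefactor : Complex.exp (-(π * I * (x + y))) * Complex.exp (-(π * I * (x - y))) *
      Complex.exp (2 * π * I * x) = 1 := by
    rw [← Complex.exp_add, ← Complex.exp_add, ← Complex.exp_zero]
    ring_nf
  have hproduct := jacobiTheta₂_add_mul_jacobiTheta₂_sub hτ (x + (1 - τ) / 2) y
  rw [heven, hodd, hfactor, show x + (1 - τ) / 2 + y = x + y + (1 - τ) / 2 by ring,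
    show x + (1 - τ) / 2 - y = x - y + (1 - τ) / 2 by ring] at hproduct
  linear_combination Complex.exp (-(π * I * (x + y))) * Complex.exp (-(π * I * (x - y))) *
      hproduct +
    (Complex.exp (2 * π * I * x) * jacobiTheta₂ (2 * x + τ) (2 * τ) * jacobiTheta₂ (2 * y) (2 * τ) -
      jacobiTheta₂ (2 * x) (2 * τ) *
        (Complex.exp (2 * π * I * y) * jacobiTheta₂ (2 * y + τ) (2 * τ))) * hprefactor

lemma isSigmaLike_oddTheta_zero : IsSigmaLike (oddTheta 0) := by
  refine .of_add_mul_sub (fun _ => 1) (fun x => Complex.exp x + Complex.exp (-x)) fun x y => ?_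
  have htheta (z : ℂ) : theta 0 z = 1 - z := by
    rw [theta, tprod_eq_mulSingle 0 fun j hj => by simp [hj]]
    simp
  simp only [oddTheta, htheta, mul_sub, sub_mul, mul_one, one_mul, ← Complex.exp_add]
  ring_nf

theorem isSigmaLike_oddTheta {p : ℝ} (hp : ‖p‖ < 1) : IsSigmaLike (oddTheta p) := by
  rcases eq_or_ne p 0 with rfl | hp0
  · exact isSigmaLike_oddTheta_zero
  set τ := Complex.log p / (2 * π * I) with hτ_def
  have hnome : Complex.exp (2 * π * I * τ) = p := by
    rw [hτ_def, mul_div_cancel₀ _ Complex.two_pi_I_ne_zero, Complex.exp_log (mod_cast hp0)]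
  have hτ : 0 < τ.im := by
    have hnorm : Real.exp (-(2 * π * τ.im)) < 1 := by
      rw [← Complex.norm_real, ← hnome, Complex.norm_exp] at hp
      simpa using hp
    exact pos_of_mul_pos_right (neg_neg_iff_pos.1 (Real.exp_lt_one_iff.1 hnorm)) Real.two_pi_pos.le
  have hφ : (∏' j : ℕ, (1 - (p : ℂ) ^ (j + 1))) ≠ 0 :=
    tprod_one_sub_pow_succ_ne_zero (by rwa [Complex.norm_real])
  have heq : oddTheta p = fun x => (∏' j : ℕ, (1 - (p : ℂ) ^ (j + 1)))⁻¹ *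
      (fun w => Complex.exp (-(π * I * w)) * jacobiTheta₂ (w + (1 - τ) / 2) τ)
        (AddMonoidHom.mulRight (2 * π * I)⁻¹ x) := by
    funext x
    have hx : 2 * π * I * (x * (2 * π * I)⁻¹) = x := by
      rw [mul_comm, inv_mul_cancel_right₀ Complex.two_pi_I_ne_zero]
    have hx' : -(π * I * (x * (2 * π * I)⁻¹)) = -x / 2 := by linear_combination -hx / 2
    simp only [AddMonoidHom.coe_mulRight, jacobiTheta₂_eq_triple_product hτ, hx, hx', hnome]
    rw [mul_left_comm, inv_mul_cancel_left₀ hφ]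
    rfl
  rw [heq]
  exact ((isSigmaLike_jacobiTheta₂ hτ).comp_addMonoidHom _).const_mul _

section DynamicalYangBaxter

variable {A K : Type*} [AddCommGroup A] [Field K]

/-- The entry `a` of the dynamical `R`-matrix in additive notation, with step `η`, dynamical
parameter `L` and spectral parameter `u`: the coefficient of `e₁ ⊗ e₋₁` in the image of itself. -/
def dynA (F : A → K) (η L u : A) : K := F u * F (L + η) / (F (u + η) * F L)

/-- The entry `b` of the dynamical `R`-matrix in additive notation: the coefficient of `e₁ ⊗ e₋₁`
in the image of `e₋₁ ⊗ e₁`. -/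
def dynB (F : A → K) (η L u : A) : K := F η * F (L - u) / (F (u + η) * F L)

/-- The entry `c` of the dynamical `R`-matrix in additive notation: the coefficient of `e₋₁ ⊗ e₁`
in the image of `e₁ ⊗ e₋₁`. -/
def dynC (F : A → K) (η L u : A) : K := F η * F (L + u) / (F (u + η) * F L)

/-- The entry `d` of the dynamical `R`-matrix in additive notation: the coefficient of `e₋₁ ⊗ e₁`
in the image of itself. -/
def dynD (F : A → K) (η L u : A) : K := F u * F (L - η) / (F (u + η) * F L)

namespace IsSigmaLike

variable {F : A → K}

lemma dynA_neg (hF : IsSigmaLike F) (η L u : A) : dynA F η (-L) u = dynD F η L u := by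
  have hshift : F (-L + η) = -F (L - η) := by rw [← hF.map_neg, neg_sub, neg_add_eq_sub]
  simp only [dynA, dynD, hF.map_neg, hshift, mul_neg, neg_div_neg_eq]

lemma dynD_neg (hF : IsSigmaLike F) (η L u : A) : dynD F η (-L) u = dynA F η L u := by
  rw [← hF.dynA_neg, neg_neg]

lemma dynC_neg (hF : IsSigmaLike F) (η L u : A) : dynC F η (-L) u = dynB F η L u := by
  have hshift : F (-L + u) = -F (L - u) := by rw [← hF.map_neg, neg_sub, neg_add_eq_sub]
  simp only [dynB, dynC, hF.map_neg, hshift, mul_neg, neg_div_neg_eq]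

lemma dynB_neg (hF : IsSigmaLike F) (η L u : A) : dynB F η (-L) u = dynC F η L u := by
  rw [← hF.dynC_neg, neg_neg]

end IsSigmaLike

section OneParticle

variable {F : A → K} {η L u v : A}

/- `oneParticle_ij` is the coefficient of `vᵢ` in the Yang–Baxter equation applied to `vⱼ`, where
`vₖ` has `e₋₁` in the `k`-th tensor factor and `e₁` in the other two. -/

lemma oneParticle_11 :
    dynD F η (L - η) u * dynD F η L (u + v) = dynD F η (L - η) (u + v) * dynD F η L u := by
  simp only [dynD]
  ring

lemma oneParticle_33 :
    dynA F η L (u + v) * dynA F η (L - η) v = dynA F η L v * dynA F η (L - η) (u + v) := by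
  simp only [dynA]
  ring

variable (hF : IsSigmaLike F) (hu : F (u + η) ≠ 0) (hv : F (v + η) ≠ 0)
  (hw : F (u + v + η) ≠ 0) (hL : F L ≠ 0) (hM : F (L - η) ≠ 0)
include hF hu hv hw hL hM

lemma oneParticle_12 :
    dynD F η (L - η) u * dynC F η L (u + v) * dynB F η (L - η) v +
        dynC F η (L - η) u * dynD F η (L - η) v =
      dynD F η (L - η) (u + v) * dynC F η L u := by
  have key : F η * F (L - η - v) * F (L + (u + v)) * F u =
      F (L + u) * F (-(u + v)) * F (v + η) * F (-(L - η)) +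
        F L * F (-v) * F (u + v + η) * F (L - η + u) := hF.three_term_of_eq
  simp only [hF.map_neg, dynB, dynC, dynD] at key ⊢
  field_simp
  linear_combination F η * F (L - η - η) * key

lemma oneParticle_13 :
    dynD F η (L - η) u * dynC F η L (u + v) * dynA F η (L - η) v +
        dynC F η (L - η) u * dynC F η (L - η) v =
      dynC F η (L - η) (u + v) := by
  have key : F v * F (L + (u + v)) * F u * F (L - η - η) =
      F (L - η + (u + v)) * F (v + η) * F (-(L - η)) * F (-(u + η)) +
        F (u + v + η) * F (L - η + v) * F (-η) * F (L - η + u) := hF.three_term_of_eq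
  simp only [hF.map_neg, dynA, dynC, dynD, sub_add_cancel] at key ⊢
  field_simp
  linear_combination F η * key

lemma oneParticle_21 :
    dynB F η (L - η) u * dynD F η L (u + v) =
      dynD F η L v * dynB F η L u + dynC F η L v * dynB F η (L - η) (u + v) * dynD F η L u := by
  have key : F (u + v) * F (L - η - u) * F (v + η) * F L =
      F (L + v) * F (-η) * F (-(L - η - (u + v))) * F u +
        F v * F (L - η) * F (u + v + η) * F (L - u) := hF.three_term_of_eq
  simp only [hF.map_neg, dynB, dynC, dynD] at key ⊢
  field_simp
  linear_combination F η * key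

lemma oneParticle_22 :
    dynB F η (L - η) u * dynC F η L (u + v) * dynB F η (L - η) v +
        dynA F η (L - η) u * dynD F η (L - η) v =
      dynD F η L v * dynA F η L u + dynC F η L v * dynB F η (L - η) (u + v) * dynC F η L u := by
  have key : F L * F (L + (u + v)) * F (L - η - u) * F (L - η - v) =
      F (L + L - η) * F (u + v + η) * F (-u) * F (-v) +
        F (L + v) * F (L + u) * F (L - η - (u + v)) * F (L - η) := hF.three_term_of_eq
  have key' : F (L - η - η) * F L * F L * F L =
      F (L + L - η) * F (-η) * F (-η) * F (-η) +
        F (L - η) * F (L - η) * F (L - η) * F (L + η) := hF.three_term_of_eq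
  simp only [hF.map_neg, dynA, dynB, dynC, dynD, sub_add_cancel] at key key' ⊢
  field_simp
  linear_combination F η ^ 3 * key + F (u + v + η) * F u * F v * key'

lemma oneParticle_23 :
    dynB F η (L - η) u * dynC F η L (u + v) * dynA F η (L - η) v +
        dynA F η (L - η) u * dynC F η (L - η) v =
      dynC F η L v * dynA F η (L - η) (u + v) := by
  have key : F v * F η * F (L + (u + v)) * F (L - η - u) =
      F (L + v) * F (-(L - η)) * F (u + v) * F (-(u + η)) +
        F (u + v + η) * F (-u) * F (L - η + v) * F L := hF.three_term_of_eq
  simp only [hF.map_neg, dynA, dynB, dynC, sub_add_cancel] at key ⊢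
  field_simp
  linear_combination F η * key

lemma oneParticle_31 :
    dynB F η L (u + v) =
      dynB F η L v * dynB F η L u + dynA F η L v * dynB F η (L - η) (u + v) * dynD F η L u := by
  have key : F (L - (u + v)) * F (u + η) * F (v + η) * F L =
      F (L + η) * F (-v) * F (-u) * F (L - η - (u + v)) +
        F η * F (L - v) * F (L - u) * F (u + v + η) := hF.three_term_of_eq
  simp only [hF.map_neg, dynA, dynB, dynD] at key ⊢
  field_simp
  linear_combination F η * key

lemma oneParticle_32 :
    dynA F η L (u + v) * dynB F η (L - η) v =
      dynB F η L v * dynA F η L u + dynA F η L v * dynB F η (L - η) (u + v) * dynC F η L u := by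
  have key : F (L - η - v) * F (u + v) * F (u + η) * F L =
      F (L + u) * F (-η) * F (-v) * F (L - η - (u + v)) +
        F u * F (L - η) * F (L - v) * F (u + v + η) := hF.three_term_of_eq
  simp only [hF.map_neg, dynA, dynB, dynC] at key ⊢
  field_simp
  linear_combination F η * F (L + η) * key

end OneParticle

end DynamicalYangBaxter

section TensorLift

variable {n K : Type*} [DecidableEq n] [Semiring K]

/-- The operator `A¹²(h⁽³⁾)` on a threefold tensor power: `A` acts in the first two factors and its
parameter is the basis index in the third. -/
def lift12 (A : n → Matrix (n × n) (n × n) K) : Matrix (n × n × n) (n × n × n) K :=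
  fun x y => A y.2.2 (x.1, x.2.1) (y.1, y.2.1) * if x.2.2 = y.2.2 then 1 else 0

/-- The operator `A¹³(h⁽²⁾)`, as in `lift12`. -/
def lift13 (A : n → Matrix (n × n) (n × n) K) : Matrix (n × n × n) (n × n × n) K :=
  fun x y => A y.2.1 (x.1, x.2.2) (y.1, y.2.2) * if x.2.1 = y.2.1 then 1 else 0

/-- The operator `A²³(h⁽¹⁾)`, as in `lift12`. -/
def lift23 (A : n → Matrix (n × n) (n × n) K) : Matrix (n × n × n) (n × n × n) K :=
  fun x y => A y.1 (x.2.1, x.2.2) (y.2.1, y.2.2) * if x.1 = y.1 then 1 else 0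

variable (A : n → Matrix (n × n) (n × n) K) (σ : n ≃ n)

lemma lift12_submatrix :
    (lift12 A).submatrix (σ.prodCongr (σ.prodCongr σ)) (σ.prodCongr (σ.prodCongr σ)) =
      lift12 fun e => (A (σ e)).submatrix (σ.prodCongr σ) (σ.prodCongr σ) := by
  ext
  simp [lift12]

lemma lift13_submatrix :
    (lift13 A).submatrix (σ.prodCongr (σ.prodCongr σ)) (σ.prodCongr (σ.prodCongr σ)) =
      lift13 fun e => (A (σ e)).submatrix (σ.prodCongr σ) (σ.prodCongr σ) := by
  ext
  simp [lift13]

lemma lift23_submatrix :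
    (lift23 A).submatrix (σ.prodCongr (σ.prodCongr σ)) (σ.prodCongr (σ.prodCongr σ)) =
      lift23 fun e => (A (σ e)).submatrix (σ.prodCongr σ) (σ.prodCongr σ) := by
  ext
  simp [lift23, Equiv.prodCongr_apply, Prod.map]

variable [Fintype n] (B C : n → Matrix (n × n) (n × n) K)

lemma lift12_mul_lift13_mul_lift23_apply (x y : n × n × n) :
    (lift12 A * lift13 B * lift23 C) x y =
      ∑ j, ∑ k, ∑ i, A x.2.2 (x.1, x.2.1) (i, j) * B j (i, x.2.2) (y.1, k) *
        C y.1 (j, k) (y.2.1, y.2.2) := by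
  simp [Matrix.mul_apply, Fintype.sum_prod_type, lift12, lift13, lift23, Finset.sum_mul, mul_assoc]

lemma lift23_mul_lift13_mul_lift12_apply (x y : n × n × n) :
    (lift23 A * lift13 B * lift12 C) x y =
      ∑ i, ∑ j, ∑ k, A x.1 (x.2.1, x.2.2) (j, k) * B j (x.1, k) (i, y.2.2) *
        C y.2.2 (i, j) (y.1, y.2.1) := by
  simp [Matrix.mul_apply, Fintype.sum_prod_type, lift12, lift13, lift23, Finset.sum_mul, mul_assoc]

end TensorLift

section DynamicalRMatrix

/-- The matrix on `V ⊗ V` with six-vertex weights `1, 1, a, b, c, d`, indexed as `Rmat`. -/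
def sixVertex {K : Type*} [Zero K] [One K] (a b c d : K) :
    Matrix (Fin 2 × Fin 2) (Fin 2 × Fin 2) K :=
  fun x y =>
    if x = (0, 0) ∧ y = (0, 0) then 1
    else if x = (1, 1) ∧ y = (1, 1) then 1
    else if x = (0, 1) ∧ y = (0, 1) then a
    else if x = (0, 1) ∧ y = (1, 0) then b
    else if x = (1, 0) ∧ y = (0, 1) then c
    else if x = (1, 0) ∧ y = (1, 0) then d
    else 0

/-- The exchange of `e₁` and `e₋₁` in both factors of `V ⊗ V`. -/
abbrev flip₂ : Equiv.Perm (Fin 2 × Fin 2) := Fin.revPerm.prodCongr Fin.revPerm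

/-- The exchange of `e₁` and `e₋₁` in all factors of `V ⊗ V ⊗ V`. -/
abbrev flip₃ : Equiv.Perm (Fin 2 × Fin 2 × Fin 2) := Fin.revPerm.prodCongr flip₂

lemma sixVertex_submatrix_flip₂ {K : Type*} [Zero K] [One K] (a b c d : K) :
    (sixVertex a b c d).submatrix flip₂ flip₂ = sixVertex d c b a := by
  ext ⟨i, j⟩ ⟨k, l⟩
  fin_cases i <;> fin_cases j <;> fin_cases k <;> fin_cases l <;> rfl

variable {A K : Type*} [AddCommGroup A] [Field K]

/-- The dynamical `R`-matrix built from a function `F` of sigma type. -/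
def dynR (F : A → K) (η L u : A) : Matrix (Fin 2 × Fin 2) (Fin 2 × Fin 2) K :=
  sixVertex (dynA F η L u) (dynB F η L u) (dynC F η L u) (dynD F η L u)

/-- The shifted dynamical parameter `L - h η` on the basis vector `e`, of weight `h = ±1`. -/
def weightShift (η L : A) (e : Fin 2) : A := if e = 0 then L - η else L + η

lemma weightShift_neg_rev (η L : A) (e : Fin 2) :
    weightShift η (-L) e.rev = -weightShift η L e := by
  fin_cases e <;> simp [weightShift] <;> abel

/-- `R¹²(λ - h⁽³⁾) R¹³(λ) R²³(λ - h⁽¹⁾)`, with additive spectral parameters `u` in `R¹²` and `v` in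
`R²³`. -/
def yangBaxterLeft (F : A → K) (η L u v : A) :
    Matrix (Fin 2 × Fin 2 × Fin 2) (Fin 2 × Fin 2 × Fin 2) K :=
  lift12 (fun e => dynR F η (weightShift η L e) u) * lift13 (fun _ => dynR F η L (u + v)) *
    lift23 (fun e => dynR F η (weightShift η L e) v)

/-- `R²³(λ) R¹³(λ - h⁽²⁾) R¹²(λ)`, with additive spectral parameters `u` in `R¹²` and `v` in
`R²³`. -/
def yangBaxterRight (F : A → K) (η L u v : A) :
    Matrix (Fin 2 × Fin 2 × Fin 2) (Fin 2 × Fin 2 × Fin 2) K :=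
  lift23 (fun _ => dynR F η L v) * lift13 (fun e => dynR F η (weightShift η L e) (u + v)) *
    lift12 (fun _ => dynR F η L u)

lemma yangBaxterLeft_apply_zero (F : A → K) (η L u v : A) (x : Fin 2 × Fin 2 × Fin 2) :
    yangBaxterLeft F η L u v x (0, 0, 0) = yangBaxterRight F η L u v x (0, 0, 0) := by
  obtain ⟨i, j, k⟩ := x
  simp only [yangBaxterLeft, yangBaxterRight, lift12_mul_lift13_mul_lift23_apply,
    lift23_mul_lift13_mul_lift12_apply, dynR, Fin.sum_univ_two]
  fin_cases i <;> fin_cases j <;> fin_cases k <;> simp [sixVertex]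

namespace IsSigmaLike

variable {F : A → K} {η L u v : A}

lemma dynR_neg (hF : IsSigmaLike F) (η L u : A) :
    (dynR F η (-L) u).submatrix flip₂ flip₂ = dynR F η L u := by
  rw [dynR, sixVertex_submatrix_flip₂, hF.dynA_neg, hF.dynB_neg, hF.dynC_neg, hF.dynD_neg, dynR]

lemma yangBaxterLeft_neg (hF : IsSigmaLike F) (η L u v : A) :
    (yangBaxterLeft F η (-L) u v).submatrix flip₃ flip₃ = yangBaxterLeft F η L u v := by
  simp only [yangBaxterLeft, ← Matrix.submatrix_mul_equiv _ _ _ flip₃, lift12_submatrix,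
    lift13_submatrix, lift23_submatrix, Fin.revPerm_apply, weightShift_neg_rev, hF.dynR_neg]

lemma yangBaxterRight_neg (hF : IsSigmaLike F) (η L u v : A) :
    (yangBaxterRight F η (-L) u v).submatrix flip₃ flip₃ = yangBaxterRight F η L u v := by
  simp only [yangBaxterRight, ← Matrix.submatrix_mul_equiv _ _ _ flip₃, lift12_submatrix,
    lift13_submatrix, lift23_submatrix, Fin.revPerm_apply, weightShift_neg_rev, hF.dynR_neg]

lemma yangBaxterLeft_apply_oneParticle (hF : IsSigmaLike F) (hu : F (u + η) ≠ 0)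
    (hv : F (v + η) ≠ 0) (hw : F (u + v + η) ≠ 0) (hL : F L ≠ 0) (hL_sub : F (L - η) ≠ 0)
    (x : Fin 2 × Fin 2 × Fin 2) {y : Fin 2 × Fin 2 × Fin 2}
    (hy : y = (1, 0, 0) ∨ y = (0, 1, 0) ∨ y = (0, 0, 1)) :
    yangBaxterLeft F η L u v x y = yangBaxterRight F η L u v x y := by
  obtain ⟨i, j, k⟩ := x
  simp only [yangBaxterLeft, yangBaxterRight, lift12_mul_lift13_mul_lift23_apply,
    lift23_mul_lift13_mul_lift12_apply, dynR, Fin.sum_univ_two]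
  rcases hy with rfl | rfl | rfl <;> fin_cases i <;> fin_cases j <;> fin_cases k <;>
    simp [sixVertex, weightShift, oneParticle_11, oneParticle_12 hF hu hv hw hL hL_sub,
      oneParticle_13 hF hu hv hw hL hL_sub, oneParticle_21 hF hu hv hw hL hL_sub,
      oneParticle_22 hF hu hv hw hL hL_sub, oneParticle_23 hF hu hv hw hL hL_sub,
      oneParticle_31 hF hu hv hw hL hL_sub, oneParticle_32 hF hu hv hw hL hL_sub, oneParticle_33]

theorem yangBaxter (hF : IsSigmaLike F) (hu : F (u + η) ≠ 0) (hv : F (v + η) ≠ 0)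
    (hw : F (u + v + η) ≠ 0) (hL : F L ≠ 0) (hL_sub : F (L - η) ≠ 0) (hL_add : F (L + η) ≠ 0) :
    yangBaxterLeft F η L u v = yangBaxterRight F η L u v := by
  have at_most_one_or_rev (y : Fin 2 × Fin 2 × Fin 2) :
      (y = (0, 0, 0) ∨ y = (1, 0, 0) ∨ y = (0, 1, 0) ∨ y = (0, 0, 1)) ∨
        y = (1, 1, 1) ∨ y = (0, 1, 1) ∨ y = (1, 0, 1) ∨ y = (1, 1, 0) := by
    decide +revert
  have hnegL : F (-L) ≠ 0 := by simpa [hF.map_neg]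
  have hnegL_sub : F (-L - η) ≠ 0 := by rwa [← neg_add', hF.map_neg, neg_ne_zero]
  ext x y
  rcases at_most_one_or_rev y with (rfl | hy) | hy
  · exact yangBaxterLeft_apply_zero F η L u v x
  · exact hF.yangBaxterLeft_apply_oneParticle hu hv hw hL hL_sub x hy
  rw [← hF.yangBaxterLeft_neg, ← hF.yangBaxterRight_neg]
  rcases hy with rfl | hy
  · exact yangBaxterLeft_apply_zero F η (-L) u v _
  · refine hF.yangBaxterLeft_apply_oneParticle hu hv hw hnegL hnegL_sub _ ?_
    rcases hy with rfl | rfl | rfl <;> simp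

end IsSigmaLike

end DynamicalRMatrix

section ThetaRMatrix

lemma theta_exp_mul_theta_exp_div (p : ℝ) {x₁ x₂ x₃ x₄ : ℂ} (h : x₁ + x₂ = x₃ + x₄) :
    theta p (Complex.exp x₁) * theta p (Complex.exp x₂) /
        (theta p (Complex.exp x₃) * theta p (Complex.exp x₄)) =
      oddTheta p x₁ * oddTheta p x₂ / (oddTheta p x₃ * oddTheta p x₄) := by
  have hexp : Complex.exp (x₁ / 2) * Complex.exp (x₂ / 2) =
      Complex.exp (x₃ / 2) * Complex.exp (x₄ / 2) := by
    rw [← Complex.exp_add, ← Complex.exp_add, ← add_div, ← add_div, h]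
  simp only [theta_exp]
  rw [mul_mul_mul_comm, mul_mul_mul_comm (Complex.exp (x₃ / 2)), hexp, mul_div_mul_left]
  exact mul_ne_zero (Complex.exp_ne_zero _) (Complex.exp_ne_zero _)

lemma qp_mul_exp (q : ℝ) (l u : ℂ) :
    qp q l * Complex.exp u = Complex.exp (l * Real.log q + u) := by
  rw [qp, Complex.exp_add]

lemma Ra_exp (p q : ℝ) (lam u : ℂ) : Ra p q lam (Complex.exp u) =
    dynA (oddTheta p) (2 * Real.log q) (2 * Real.log q * (lam + 1)) u := by
  rw [Ra, dynA, qp_mul_exp, qp, qp, theta_exp_mul_theta_exp_div p (by ring)]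
  ring_nf

lemma Rc_exp (p q : ℝ) (lam u : ℂ) : Rc p q lam (Complex.exp u) =
    dynC (oddTheta p) (2 * Real.log q) (2 * Real.log q * (lam + 1)) u := by
  rw [Rc, dynC, qp_mul_exp, qp_mul_exp, qp, qp, theta_exp_mul_theta_exp_div p (by ring)]
  ring_nf

lemma Rb_exp {p : ℝ} (hp : ‖p‖ < 1) (q : ℝ) (lam u : ℂ) : Rb p q lam (Complex.exp u) =
    dynB (oddTheta p) (2 * Real.log q) (2 * Real.log q * (lam + 1)) u := by
  rw [Rb, ← (isSigmaLike_oddTheta hp).dynC_neg, dynC, qp_mul_exp, qp_mul_exp, qp, qp,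
    theta_exp_mul_theta_exp_div p (by ring)]
  ring_nf

lemma Rd_exp {p : ℝ} (hp : ‖p‖ < 1) (q : ℝ) (lam u : ℂ) : Rd p q lam (Complex.exp u) =
    dynD (oddTheta p) (2 * Real.log q) (2 * Real.log q * (lam + 1)) u := by
  rw [Rd, ← (isSigmaLike_oddTheta hp).dynA_neg, dynA, qp_mul_exp, qp, qp,
    theta_exp_mul_theta_exp_div p (by ring)]
  ring_nf

lemma Rmat_exp {p : ℝ} (hp : ‖p‖ < 1) (q : ℝ) (lam u : ℂ) : Rmat p q lam (Complex.exp u) =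
    dynR (oddTheta p) (2 * Real.log q) (2 * Real.log q * (lam + 1)) u := by
  rw [dynR, ← Ra_exp, ← Rb_exp hp, ← Rc_exp, ← Rd_exp hp]
  rfl

lemma Rmat_sub_wt_exp {p : ℝ} (hp : ‖p‖ < 1) (q : ℝ) (lam u : ℂ) (e : Fin 2) :
    Rmat p q (lam - wt e) (Complex.exp u) =
      dynR (oddTheta p) (2 * Real.log q)
        (weightShift (2 * Real.log q) (2 * Real.log q * (lam + 1)) e) u := by
  rw [Rmat_exp hp]
  congr 1
  fin_cases e <;> simp [weightShift, wt] <;> ring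

lemma R12_eq_lift12 (p q : ℝ) (f : Fin 2 → ℂ) (z : ℂ) :
    R12 p q f z = lift12 fun e => Rmat p q (f e) z :=
  rfl

lemma R13_eq_lift13 (p q : ℝ) (f : Fin 2 → ℂ) (z : ℂ) :
    R13 p q f z = lift13 fun e => Rmat p q (f e) z :=
  rfl

lemma R23_eq_lift23 (p q : ℝ) (f : Fin 2 → ℂ) (z : ℂ) :
    R23 p q f z = lift23 fun e => Rmat p q (f e) z :=
  rfl

lemma oddTheta_ne_zero_of_theta_qp {p q : ℝ} {l x : ℂ} (h : theta p (qp q l) ≠ 0)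
    (hx : x = l * Real.log q) : oddTheta p x ≠ 0 := by
  rwa [hx, Ne, oddTheta_eq_zero_iff]

lemma oddTheta_ne_zero_of_theta_qp_mul_exp {p q : ℝ} {l u x : ℂ}
    (h : theta p (qp q l * Complex.exp u) ≠ 0) (hx : x = u + l * Real.log q) :
    oddTheta p x ≠ 0 := by
  rwa [hx, add_comm, Ne, oddTheta_eq_zero_iff, ← qp_mul_exp]

theorem ABF_QDYBE_general (p q : ℝ) (hp : |p| < 1) (_hq : 0 < q) (lam z1 z2 z3 : ℂ)
    (hz1 : z1 ≠ 0) (hz2 : z2 ≠ 0) (hz3 : z3 ≠ 0)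
    (h12 : theta p (qp q 2 * (z1 / z2)) ≠ 0)
    (h13 : theta p (qp q 2 * (z1 / z3)) ≠ 0)
    (h23 : theta p (qp q 2 * (z2 / z3)) ≠ 0)
    (hlam : ∀ m : ℤ, m = -1 ∨ m = 0 ∨ m = 1 → theta p (qp q (2 * (lam + (m : ℂ) + 1))) ≠ 0) :
    R12 p q (fun e => lam - wt e) (z1 / z2) * R13 p q (fun _ => lam) (z1 / z3) *
        R23 p q (fun e => lam - wt e) (z2 / z3) =
      R23 p q (fun _ => lam) (z2 / z3) * R13 p q (fun e => lam - wt e) (z1 / z3) *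
        R12 p q (fun _ => lam) (z1 / z2) := by
  obtain ⟨u, hu⟩ : ∃ u, Complex.exp u = z1 / z2 := ⟨_, Complex.exp_log (div_ne_zero hz1 hz2)⟩
  obtain ⟨v, hv⟩ : ∃ v, Complex.exp v = z2 / z3 := ⟨_, Complex.exp_log (div_ne_zero hz2 hz3)⟩
  have huv : Complex.exp (u + v) = z1 / z3 := by
    rw [Complex.exp_add, hu, hv, div_mul_div_cancel₀ hz2]
  rw [← hu] at h12
  rw [← huv] at h13
  rw [← hv] at h23
  have hyb := (isSigmaLike_oddTheta hp).yangBaxter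
    (oddTheta_ne_zero_of_theta_qp_mul_exp h12 rfl) (oddTheta_ne_zero_of_theta_qp_mul_exp h23 rfl)
    (oddTheta_ne_zero_of_theta_qp_mul_exp h13 rfl) (L := 2 * Real.log q * (lam + 1))
    (oddTheta_ne_zero_of_theta_qp (hlam 0 (by simp)) (by push_cast; ring))
    (oddTheta_ne_zero_of_theta_qp (hlam (-1) (by simp)) (by push_cast; ring))
    (oddTheta_ne_zero_of_theta_qp (hlam 1 (by simp)) (by push_cast; ring))
  simpa only [yangBaxterLeft, yangBaxterRight, ← Rmat_exp hp, ← Rmat_sub_wt_exp hp, hu, hv, huv,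
    ← R12_eq_lift12, ← R13_eq_lift13, ← R23_eq_lift23] using hyb

end ThetaRMatrix

/-- The quantum dynamical Yang–Baxter equation with spectral parameter for the
ABF `R`-matrix:
`R¹²(λ−h⁽³⁾, z₁/z₂) R¹³(λ, z₁/z₃) R²³(λ−h⁽¹⁾, z₂/z₃)
  = R²³(λ, z₂/z₃) R¹³(λ−h⁽²⁾, z₁/z₃) R¹²(λ, z₁/z₂)`. -/
theorem ABF_QDYBE (p q : ℝ) (hp0 : 0 < p) (hp1 : p < 1) (hq0 : 0 < q) (hq1 : q < 1)
    (lam z1 z2 z3 : ℂ) (hz1 : z1 ≠ 0) (hz2 : z2 ≠ 0) (hz3 : z3 ≠ 0)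
    (h12 : theta p (qp q 2 * (z1 / z2)) ≠ 0)
    (h13 : theta p (qp q 2 * (z1 / z3)) ≠ 0)
    (h23 : theta p (qp q 2 * (z2 / z3)) ≠ 0)
    (hlam : ∀ m : ℤ, m = -1 ∨ m = 0 ∨ m = 1 →
      theta p (qp q (2 * (lam + (m : ℂ) + 1))) ≠ 0 ∧
        theta p (qp q (-2 * (lam + (m : ℂ) + 1))) ≠ 0) :
    R12 p q (fun e => lam - wt e) (z1 / z2) * R13 p q (fun _ => lam) (z1 / z3) *
        R23 p q (fun e => lam - wt e) (z2 / z3) =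
      R23 p q (fun _ => lam) (z2 / z3) * R13 p q (fun e => lam - wt e) (z1 / z3) *
        R12 p q (fun _ => lam) (z1 / z2) := by
  exact ABF_QDYBE_general p q (abs_lt.2 ⟨by linarith, hp1⟩) hq0 lam z1 z2 z3 hz1 hz2 hz3 h12 h13 h23
    fun m hm => (hlam m hm).1

end
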